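/- arXiv:2307.02501 — 2 statements merged into one kernel-verified Lean document; each statement's English description precedes it below -/
import Mathlib

section
/- Finite-Minkowski-dimension bound on the algorithm-dependent Rademacher complexity: Suppose ℓ(θ,z) is L-Lipschitz in θ for every z and takes values in an interval of length b, and n > 2. Let Θ̂ⁿ ⊂ ℝ^k be finite, and let F ⊇ Θ̂ⁿ be any finite non-focal set in ℝ^k with |F| > 2. Then Rad(Θ̂ⁿ, S⁺) ≤ L·∇(F) + b·√( (2·dim_fM(F)/n) · log(Δ(F)/∇(F)) ), where dim_fM(F) = log T(F) / log(Δ(F)/∇(F)). -/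
open MeasureTheory Real

/-- Empirical Rademacher complexity of the set `C` on the sample `S` (`true ↔ +1`). -/
noncomputable def rad {X Z : Type*} (ℓ : X → Z → ℝ) {n : ℕ} (C : Set X) (S : Fin n → Z) : ℝ :=
  (n : ℝ)⁻¹ * ((2 ^ n : ℝ)⁻¹ *
    ∑ σ : Fin n → Bool, sSup ((fun θ => ∑ i, (if σ i then (1 : ℝ) else -1) * ℓ θ (S i)) '' C))

/-- Nearest-neighbour distance `ν_C(a) = min {d(a,b) : b ∈ C, b ≠ a}`. -/
noncomputable def nnDist {X : Type*} [PseudoMetricSpace X] (C : Finset X) (a : X) : ℝ :=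
  sInf ((fun b => dist a b) '' {b | b ∈ C ∧ b ≠ a})

/-- Covering diameter `∇(C) = max_{a ∈ C} ν_C(a)`. -/
noncomputable def covDiam {X : Type*} [PseudoMetricSpace X] (C : Finset X) : ℝ :=
  sSup (nnDist C '' (C : Set X))

/-- `T(C)`: minimal cardinality of a 2-cover of `C` (a family of subsets of `C`, each with at
least two elements, covering `C`) all of whose members have diameter at most `∇(C)`. -/
noncomputable def Tnum {X : Type*} [PseudoMetricSpace X] (C : Finset X) : ℕ :=
  sInf {m : ℕ | ∃ U : Finset (Finset X), U.card = m ∧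
    (∀ u ∈ U, u ⊆ C ∧ 2 ≤ u.card ∧ Metric.diam (u : Set X) ≤ covDiam C) ∧
    ∀ a ∈ C, ∃ u ∈ U, a ∈ u}

/-- Finite Minkowski dimension `dim_fM(C) = log T(C) / log(Δ(C)/∇(C))`. -/
noncomputable def dimfM {X : Type*} [PseudoMetricSpace X] (C : Finset X) : ℝ :=
  Real.log (Tnum C) / Real.log (Metric.diam (C : Set X) / covDiam C)

/-! Fix in each member of a minimal 2-cover of `F` one point. Replacing every parameter by the point
chosen in a member containing it costs `L * ∇(F)`, and leaves at most `T(F)` parameters. For these,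
the signed sums `∑ᵢ σᵢ ℓ(θ, Zᵢ)` are sub-Gaussian by Hoeffding's lemma, so the expectation of their
maximum is controlled by `log T(F) = dim_fM(F) * log (Δ(F) / ∇(F))`. -/

section

open ProbabilityTheory
open scoped NNReal

/-! ### Sub-Gaussian maximal inequality -/

theorem le_sqrt_two_mul_of_forall_mul_le {x A c : ℝ} (hA : 0 ≤ A) (hc : 0 ≤ c)
    (h : ∀ t > 0, t * x ≤ A + c * t ^ 2 / 2) : x ≤ √(2 * c * A) := by
  obtain hx | hx := le_or_gt x 0
  · exact hx.trans (sqrt_nonneg _)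
  have hdiscrim : discrim (c / 2) (-x) A ≤ 0 := by
    refine discrim_le_zero fun t => ?_
    obtain ht | ht := le_or_gt t 0
    · nlinarith [mul_nonneg hc (mul_self_nonneg t), mul_nonneg hx.le (neg_nonneg.2 ht)]
    · linarith [h t ht]
  refine le_sqrt_of_sq_le ?_
  rw [discrim] at hdiscrim
  linarith

variable {Ω κ : Type*} [MeasurableSpace Ω] {μ : Measure Ω}

theorem integrable_finset_sup' {U : Finset κ} (hU : U.Nonempty) {X : κ → Ω → ℝ}
    (hX : ∀ u ∈ U, Integrable (X u) μ) : Integrable (fun ω => U.sup' hU (X · ω)) μ := by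
  have : Integrable (U.sup' hU X) μ :=
    Finset.sup'_induction hU X (p := (Integrable · μ)) (fun _ hf _ hg => hf.sup hg) hX
  simpa only [funext fun ω => Finset.sup'_apply hU X ω] using this

theorem mul_integral_sup'_le_of_hasSubgaussianMGF [IsProbabilityMeasure μ] {U : Finset κ}
    (hU : U.Nonempty) {X : κ → Ω → ℝ} {c : ℝ≥0} (hX : ∀ u ∈ U, HasSubgaussianMGF (X u) c μ)
    {t : ℝ} (ht : 0 < t) :
    t * ∫ ω, U.sup' hU (X · ω) ∂μ ≤ log U.card + c * t ^ 2 / 2 := by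
  have hmax_exp (ω : Ω) :
      exp (t * U.sup' hU (X · ω)) = U.sup' hU fun u => exp (t * X u ω) :=
    map_finset_sup' (OrderHom.mk (fun x => exp (t * x))
      (exp_monotone.comp (monotone_mul_left_of_nonneg ht.le))) hU _
  have hexp_int : ∀ u ∈ U, Integrable (fun ω => exp (t * X u ω)) μ :=
    fun u hu => (hX u hu).integrable_exp_mul t
  have hmax_exp_int : Integrable (fun ω => exp (t * U.sup' hU (X · ω))) μ := by
    simpa only [hmax_exp] using integrable_finset_sup' hU hexp_int
  have hmax_int : Integrable (fun ω => t * U.sup' hU (X · ω)) μ :=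
    (integrable_finset_sup' hU fun u hu => (hX u hu).integrable).const_mul t
  have hcard : (0 : ℝ) < U.card := Nat.cast_pos.2 hU.card_pos
  rw [← integral_const_mul, ← exp_le_exp, exp_add, exp_log hcard]
  calc exp (∫ ω, t * U.sup' hU (X · ω) ∂μ)
      ≤ ∫ ω, exp (t * U.sup' hU (X · ω)) ∂μ :=
        convexOn_exp.map_integral_le continuous_exp.continuousOn isClosed_univ
          (ae_of_all _ fun _ => Set.mem_univ _) hmax_int hmax_exp_int
    _ ≤ ∫ ω, ∑ u ∈ U, exp (t * X u ω) ∂μ := by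
        refine integral_mono hmax_exp_int (integrable_finsetSum U hexp_int) fun ω => ?_
        simp only [hmax_exp]
        exact Finset.sup'_le hU _ fun u hu =>
          Finset.single_le_sum (fun v _ => (exp_pos (t * X v ω)).le) hu
    _ = ∑ u ∈ U, mgf (X u) μ t := integral_finsetSum U hexp_int
    _ ≤ ∑ _u ∈ U, exp (c * t ^ 2 / 2) := Finset.sum_le_sum fun u hu => (hX u hu).mgf_le t
    _ = U.card * exp (c * t ^ 2 / 2) := by rw [Finset.sum_const, nsmul_eq_mul]

theorem integral_sup'_le_of_hasSubgaussianMGF [IsProbabilityMeasure μ] {U : Finset κ}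
    (hU : U.Nonempty) {X : κ → Ω → ℝ} {c : ℝ≥0} (hX : ∀ u ∈ U, HasSubgaussianMGF (X u) c μ) :
    ∫ ω, U.sup' hU (X · ω) ∂μ ≤ √(2 * c * log U.card) :=
  le_sqrt_two_mul_of_forall_mul_le (log_natCast_nonneg _) c.coe_nonneg
    fun _ ht => mul_integral_sup'_le_of_hasSubgaussianMGF hU hX ht

/-! ### Rademacher sums -/

variable {ι : Type*} [Fintype ι]

/-- The law of a family of independent uniform signs indexed by `ι`; as in `rad`, a sign is encoded
by a Boolean, with `true` standing for `+1`. -/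
noncomputable def rademacherMeasure (ι : Type*) [Fintype ι] : Measure (ι → Bool) :=
  Measure.pi fun _ => (PMF.uniformOfFintype Bool).toMeasure

instance : IsProbabilityMeasure (rademacherMeasure ι) :=
  inferInstanceAs (IsProbabilityMeasure (Measure.pi _))

/-- The signed sum `∑ᵢ σᵢ vᵢ` of a family of reals, with the Boolean encoding of signs of `rad`. -/
noncomputable def rademacherSum (σ : ι → Bool) (v : ι → ℝ) : ℝ :=
  ∑ i, (if σ i then (1 : ℝ) else -1) * v i

theorem rademacherSum_add (σ : ι → Bool) (v w : ι → ℝ) :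
    rademacherSum σ (v + w) = rademacherSum σ v + rademacherSum σ w := by
  simp only [rademacherSum, Pi.add_apply, mul_add, Finset.sum_add_distrib]

theorem rademacherSum_le_add {v w : ι → ℝ} {ε : ℝ} (h : ∀ i, |v i - w i| ≤ ε) (σ : ι → Bool) :
    rademacherSum σ v ≤ rademacherSum σ w + Fintype.card ι * ε := by
  have hterm (i : ι) : (if σ i then (1 : ℝ) else -1) * v i ≤
      (if σ i then (1 : ℝ) else -1) * w i + ε := by
    have := abs_le.1 (h i)
    split_ifs <;> linarith
  refine (Finset.sum_le_sum fun i _ => hterm i).trans_eq ?_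
  rw [Finset.sum_add_distrib, Finset.sum_const, nsmul_eq_mul, Finset.card_univ, rademacherSum]

theorem integral_rademacherMeasure [DecidableEq ι] (f : (ι → Bool) → ℝ) :
    ∫ σ, f σ ∂rademacherMeasure ι = (2 ^ Fintype.card ι : ℝ)⁻¹ * ∑ σ, f σ := by
  have hmass (σ : ι → Bool) :
      (rademacherMeasure ι).real {σ} = (2 ^ Fintype.card ι : ℝ)⁻¹ := by
    simp [rademacherMeasure, measureReal_def]
  simp only [integral_fintype .of_finite, hmass, smul_eq_mul, Finset.mul_sum]

theorem integral_sign_mul_rademacherMeasure (i : ι) (x : ℝ) :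
    ∫ σ, (if σ i then (1 : ℝ) else -1) * x ∂rademacherMeasure ι = 0 := by
  have hcoord := integral_comp_eval (μ := fun _ : ι => (PMF.uniformOfFintype Bool).toMeasure)
    (i := i) (f := fun s : Bool => (if s then (1 : ℝ) else -1) * x)
    Measurable.of_discrete.aestronglyMeasurable
  rw [rademacherMeasure, hcoord, PMF.integral_eq_sum]
  simp

theorem integral_rademacherSum (v : ι → ℝ) :
    ∫ σ, rademacherSum σ v ∂rademacherMeasure ι = 0 := by
  simp only [rademacherSum, integral_finsetSum _ fun _ _ => Integrable.of_finite,
    integral_sign_mul_rademacherMeasure, Finset.sum_const_zero]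

theorem hasSubgaussianMGF_rademacherSum {v : ι → ℝ} {r : ι → ℝ≥0} (hv : ∀ i, |v i| ≤ r i) :
    HasSubgaussianMGF (rademacherSum · v) (∑ i, r i ^ 2) (rademacherMeasure ι) := by
  have hterm (i : ι) : HasSubgaussianMGF
      (fun σ : ι → Bool => (if σ i then (1 : ℝ) else -1) * v i) (r i ^ 2)
      (rademacherMeasure ι) := by
    convert hasSubgaussianMGF_of_mem_Icc_of_integral_eq_zero (a := -r i) (b := r i)
      (Measurable.of_discrete.aemeasurable) (ae_of_all _ fun σ => ?_)
      (integral_sign_mul_rademacherMeasure i (v i)) using 2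
    · ext; simp [abs_of_nonneg]
    · have := abs_le.1 (hv i)
      split_ifs <;> constructor <;> linarith
  have hindep : iIndepFun (fun i (σ : ι → Bool) => (if σ i then (1 : ℝ) else -1) * v i)
      (rademacherMeasure ι) :=
    iIndepFun_pi (X := fun i (s : Bool) => (if s then (1 : ℝ) else -1) * v i)
      fun _ => Measurable.of_discrete.aemeasurable
  exact HasSubgaussianMGF.sum_of_iIndepFun hindep fun i _ => hterm i

/-! ### Empirical Rademacher complexity -/

variable {X Z : Type*} {ℓ : X → Z → ℝ} {n : ℕ} {S : Fin n → Z}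

theorem rad_eq_integral (ℓ : X → Z → ℝ) (C : Set X) (S : Fin n → Z) :
    rad ℓ C S = (n : ℝ)⁻¹ * ∫ σ,
      sSup ((fun θ => rademacherSum σ fun i => ℓ θ (S i)) '' C) ∂rademacherMeasure (Fin n) := by
  rw [integral_rademacherMeasure, Fintype.card_fin]
  rfl

theorem rad_coe_finset_eq_integral (ℓ : X → Z → ℝ) {U : Finset X} (hU : U.Nonempty)
    (S : Fin n → Z) :
    rad ℓ (U : Set X) S = (n : ℝ)⁻¹ * ∫ σ,
      U.sup' hU (fun θ => rademacherSum σ fun i => ℓ θ (S i)) ∂rademacherMeasure (Fin n) := by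
  simp only [rad_eq_integral, Finset.sup'_eq_csSup_image]

theorem rad_le_rad_add_of_forall_exists_abs_sub_le [NeZero n] {C : Set X} (hC : C.Nonempty)
    (U : Finset X) {ε : ℝ}
    (hCU : ∀ θ ∈ C, ∃ u ∈ U, ∀ i, |ℓ θ (S i) - ℓ u (S i)| ≤ ε) :
    rad ℓ C S ≤ rad ℓ (U : Set X) S + ε := by
  have hpointwise (σ : Fin n → Bool) :
      sSup ((fun θ => rademacherSum σ fun i => ℓ θ (S i)) '' C) ≤
        sSup ((fun θ => rademacherSum σ fun i => ℓ θ (S i)) '' U) + n * ε := by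
    refine csSup_le (hC.image _) ?_
    rintro _ ⟨θ, hθ, rfl⟩
    obtain ⟨u, hu, hθu⟩ := hCU θ hθ
    have hu_le : rademacherSum σ (fun i => ℓ u (S i)) ≤
        sSup ((fun θ => rademacherSum σ fun i => ℓ θ (S i)) '' U) :=
      le_csSup (U.finite_toSet.image _).bddAbove ⟨u, hu, rfl⟩
    have hθ_le := rademacherSum_le_add hθu σ
    rw [Fintype.card_fin] at hθ_le
    linarith
  rw [rad_eq_integral, rad_eq_integral, inv_mul_le_iff₀ (Nat.cast_pos.2 (NeZero.pos n)), mul_add,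
    mul_inv_cancel_left₀ (NeZero.ne (n : ℝ))]
  refine (integral_mono .of_finite .of_finite hpointwise).trans_eq ?_
  rw [integral_add .of_finite .of_finite, integral_const, probReal_univ, one_smul]

/-- **Massart's finite class lemma**. The centres `c i` are free because `∑ᵢ σᵢ cᵢ` has mean zero
and does not depend on the parameter. -/
theorem rad_le_mul_sqrt_log_card [NeZero n] {U : Finset X} (hU : U.Nonempty) {c : Fin n → ℝ}
    {r : ℝ} (hr : ∀ θ ∈ U, ∀ i, |ℓ θ (S i) - c i| ≤ r) :
    rad ℓ (U : Set X) S ≤ r * √(2 * log U.card / n) := by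
  have hr0 : 0 ≤ r := (abs_nonneg _).trans (hr _ hU.choose_spec 0)
  have hn : (0 : ℝ) < n := Nat.cast_pos.2 (NeZero.pos n)
  lift r to ℝ≥0 using hr0
  let Y (θ : X) (σ : Fin n → Bool) : ℝ := rademacherSum σ fun i => ℓ θ (S i) - c i
  have hsplit (σ : Fin n → Bool) : (U.sup' hU fun θ => rademacherSum σ fun i => ℓ θ (S i)) =
      U.sup' hU (Y · σ) + rademacherSum σ c := by
    simp only [Y, Finset.sup'_add, ← rademacherSum_add, Pi.add_def, sub_add_cancel]
  have hmax : ∫ σ, U.sup' hU (Y · σ) ∂rademacherMeasure (Fin n) ≤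
      √(2 * (n * r ^ 2) * log U.card) := by
    simpa using integral_sup'_le_of_hasSubgaussianMGF hU fun θ hθ =>
      hasSubgaussianMGF_rademacherSum (hr θ hθ)
  have hsqrt : √(2 * (n * r ^ 2) * log U.card) = n * (r * √(2 * log U.card / n)) := by
    have hfactor : 2 * (n * (r : ℝ) ^ 2) * log U.card = (n * r) ^ 2 * (2 * log U.card / n) := by
      field_simp
    rw [hfactor, sqrt_mul (sq_nonneg _), sqrt_sq (by positivity), mul_assoc]
  simp only [rad_coe_finset_eq_integral ℓ hU, hsplit]
  rw [integral_add .of_finite .of_finite, integral_rademacherSum, add_zero, inv_mul_le_iff₀ hn]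
  exact hmax.trans_eq hsqrt

/-! ### Covering diameter and finite Minkowski dimension -/

theorem exists_dist_eq_nnDist [PseudoMetricSpace X] {F : Finset X} (hF : F.Nontrivial) (x : X) :
    ∃ y ∈ F, y ≠ x ∧ dist x y = nnDist F x := by
  have hfin : {y | y ∈ F ∧ y ≠ x}.Finite := F.finite_toSet.subset fun _ hy => hy.1
  have hne : {y | y ∈ F ∧ y ≠ x}.Nonempty := hF.exists_ne x
  obtain ⟨y, ⟨hyF, hyx⟩, hdist⟩ := (hne.image (dist x ·)).csInf_mem (hfin.image _)
  exact ⟨y, hyF, hyx, hdist⟩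

theorem nnDist_le_covDiam [PseudoMetricSpace X] {F : Finset X} {x : X} (hx : x ∈ F) :
    nnDist F x ≤ covDiam F :=
  le_csSup (F.finite_toSet.image _).bddAbove (Set.mem_image_of_mem _ hx)

theorem covDiam_nonneg [PseudoMetricSpace X] (F : Finset X) : 0 ≤ covDiam F := by
  refine sSup_nonneg ?_
  rintro _ ⟨x, -, rfl⟩
  refine sInf_nonneg ?_
  rintro _ ⟨y, -, rfl⟩
  exact dist_nonneg

theorem covDiam_pos [MetricSpace X] {F : Finset X} (hF : F.Nontrivial) : 0 < covDiam F := by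
  obtain ⟨x, hx⟩ := hF.nonempty
  obtain ⟨y, -, hyx, hdist⟩ := exists_dist_eq_nnDist hF x
  exact (dist_pos.2 hyx.symm).trans_le (hdist.trans_le (nnDist_le_covDiam hx))

theorem nontrivial_of_covDiam_lt_diam [PseudoMetricSpace X] {F : Finset X}
    (hF : covDiam F < Metric.diam (F : Set X)) : F.Nontrivial := by
  by_contra h
  rw [Metric.diam_subsingleton (Set.not_nontrivial_iff.1 h)] at hF
  exact hF.not_ge (covDiam_nonneg F)

/-- The 2-covers over which `T(C)` minimises: families of subsets of `C`, each with at least two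
elements and of diameter at most `∇(C)`, whose union is `C`. -/
def IsCovDiamTwoCover [PseudoMetricSpace X] (C : Finset X) (U : Finset (Finset X)) : Prop :=
  (∀ u ∈ U, u ⊆ C ∧ 2 ≤ u.card ∧ Metric.diam (u : Set X) ≤ covDiam C) ∧ ∀ a ∈ C, ∃ u ∈ U, a ∈ u

/-- The pairs formed by a point and one of its nearest neighbours are a suitable 2-cover. -/
theorem exists_isCovDiamTwoCover [PseudoMetricSpace X] {F : Finset X} (hF : F.Nontrivial) :
    ∃ U, IsCovDiamTwoCover F U := by
  classical
  choose near near_mem near_ne dist_near using exists_dist_eq_nnDist hF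
  refine ⟨F.image fun x => {x, near x}, Finset.forall_mem_image.2 fun x hx => ⟨?_, ?_, ?_⟩,
    fun x hx => ⟨{x, near x}, Finset.mem_image_of_mem _ hx, Finset.mem_insert_self _ _⟩⟩
  · exact Finset.insert_subset hx (Finset.singleton_subset_iff.2 (near_mem x))
  · exact (Finset.card_pair (near_ne x).symm).ge
  · rw [Finset.coe_pair, Metric.diam_pair, dist_near]
    exact nnDist_le_covDiam hx

theorem exists_isCovDiamTwoCover_card_eq_Tnum [PseudoMetricSpace X] {F : Finset X}
    (hF : F.Nontrivial) : ∃ U, U.card = Tnum F ∧ IsCovDiamTwoCover F U := by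
  obtain ⟨U, hU⟩ := exists_isCovDiamTwoCover hF
  exact Nat.sInf_mem (s := {m | ∃ U, U.card = m ∧ IsCovDiamTwoCover F U}) ⟨U.card, U, rfl, hU⟩

theorem exists_subset_card_le_Tnum_forall_exists_dist_le [PseudoMetricSpace X] {F : Finset X}
    (hF : F.Nontrivial) :
    ∃ P ⊆ F, P.card ≤ Tnum F ∧ ∀ x ∈ F, ∃ p ∈ P, dist x p ≤ covDiam F := by
  classical
  obtain ⟨U, hUcard, hU, hcover⟩ := exists_isCovDiamTwoCover_card_eq_Tnum hF
  have hne (u : U) : u.1.Nonempty := Finset.card_pos.1 (two_pos.trans_le (hU u u.2).2.1)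
  choose p hp using hne
  refine ⟨U.attach.image p, ?_, ?_, fun x hx => ?_⟩
  · exact Finset.image_subset_iff.2 fun u _ => (hU u u.2).1 (hp u)
  · exact Finset.card_image_le.trans_eq (U.card_attach.trans hUcard)
  · obtain ⟨u, hu, hxu⟩ := hcover x hx
    refine ⟨p ⟨u, hu⟩, Finset.mem_image_of_mem _ (U.mem_attach _), ?_⟩
    exact (Metric.dist_le_diam_of_mem u.finite_toSet.isBounded hxu (hp ⟨u, hu⟩)).trans
      (hU u hu).2.2

theorem dimfM_mul_log [MetricSpace X] {F : Finset X}
    (hF : covDiam F < Metric.diam (F : Set X)) :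
    dimfM F * log (Metric.diam (F : Set X) / covDiam F) = log (Tnum F) := by
  have hpos : 0 < covDiam F := covDiam_pos (nontrivial_of_covDiam_lt_diam hF)
  exact div_mul_cancel₀ _ (log_pos ((one_lt_div hpos).2 hF)).ne'

/-- The values of `ℓ · (S i)` lie in an interval with centre `c i` and radius `r`, so `r` is half of
the length `b` in the paper's formulation. -/
theorem stmt_3_general [MetricSpace X] [NeZero n] {L : ℝ≥0} {r : ℝ} {c : Fin n → ℝ}
    {C : Set X} {F : Finset X} (hC : C.Nonempty) (hCF : C ⊆ F)
    (hF : covDiam F < Metric.diam (F : Set X))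
    (hLip : ∀ i, LipschitzOnWith L (fun θ => ℓ θ (S i)) F)
    (hr : ∀ θ ∈ F, ∀ i, |ℓ θ (S i) - c i| ≤ r) :
    rad ℓ C S ≤ L * covDiam F +
      r * √((2 * dimfM F / n) * log (Metric.diam (F : Set X) / covDiam F)) := by
  have hFnt := nontrivial_of_covDiam_lt_diam hF
  obtain ⟨P, hPF, hPcard, hPnet⟩ := exists_subset_card_le_Tnum_forall_exists_dist_le hFnt
  obtain ⟨p, hp, -⟩ := hPnet _ hFnt.nonempty.choose_spec
  have hr0 : 0 ≤ r := (abs_nonneg _).trans (hr p (hPF hp) 0)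
  have hlogP : log P.card ≤ log (Tnum F) :=
    log_le_log (Nat.cast_pos.2 (Finset.card_pos.2 ⟨p, hp⟩)) (Nat.cast_le.2 hPcard)
  have hdiscretize : rad ℓ C S ≤ rad ℓ (P : Set X) S + L * covDiam F := by
    refine rad_le_rad_add_of_forall_exists_abs_sub_le hC P fun θ hθ => ?_
    obtain ⟨q, hq, hdist⟩ := hPnet θ (hCF hθ)
    exact ⟨q, hq, fun i => ((hLip i).dist_le_mul θ (hCF hθ) q (hPF hq)).trans
      (mul_le_mul_of_nonneg_left hdist L.coe_nonneg)⟩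
  calc rad ℓ C S ≤ rad ℓ (P : Set X) S + L * covDiam F := hdiscretize
    _ ≤ r * √(2 * log P.card / n) + L * covDiam F := by
      gcongr
      exact rad_le_mul_sqrt_log_card ⟨p, hp⟩ fun θ hθ => hr θ (hPF hθ)
    _ ≤ r * √(2 * log (Tnum F) / n) + L * covDiam F := by gcongr
    _ = _ := by rw [add_comm, ← dimfM_mul_log hF, ← mul_assoc, div_mul_eq_mul_div]

end

/-- finite-Minkowski-dimension bound on the ARC.
If `ℓ` is `L`-Lipschitz in `θ` (w.r.t. the `ℓ∞` metric on `ℝᵏ`) and takes values in an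
interval of length `b`, `n > 2`, `Θ̂ⁿ ⊂ ℝᵏ` is finite, and `F ⊇ Θ̂ⁿ` is a finite non-focal
set with `|F| > 2`, then
`Rad(Θ̂ⁿ, S⁺) ≤ L ∇(F) + b √((2 dim_fM(F)/n) log(Δ(F)/∇(F)))`. -/
theorem stmt_3 {Z : Type*} (k n : ℕ) (hn : 2 < n)
    (ℓ : (Fin k → ℝ) → Z → ℝ) (L a b : ℝ) (hL : 0 ≤ L)
    (hLip : ∀ z θ θ', |ℓ θ z - ℓ θ' z| ≤ L * dist θ θ')
    (hrange : ∀ θ z, ℓ θ z ∈ Set.Icc a (a + b))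
    (C F : Finset (Fin k → ℝ)) (hCne : C.Nonempty) (hCF : C ⊆ F)
    (hFcard : 2 < F.card) (hFnonfocal : covDiam F < Metric.diam (F : Set (Fin k → ℝ)))
    (S : Fin n → Z) :
    rad ℓ (C : Set (Fin k → ℝ)) S ≤
      L * covDiam F +
        b * Real.sqrt ((2 * dimfM F / n) *
          Real.log (Metric.diam (F : Set (Fin k → ℝ)) / covDiam F)) := by
  have : NeZero n := ⟨by omega⟩
  have hcentre (θ : Fin k → ℝ) (z : Z) : |ℓ θ z - a| ≤ b :=
    abs_sub_le_iff.2 ⟨by linarith [(hrange θ z).2], by linarith [(hrange θ z).1, (hrange θ z).2]⟩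
  exact stmt_3_general (L := ⟨L, hL⟩) (Finset.coe_nonempty.2 hCne) (Finset.coe_subset.2 hCF)
    hFnonfocal (fun i => (LipschitzWith.of_dist_le_mul (hLip (S i))).lipschitzOnWith)
    fun θ _ i => hcentre θ (S i)
end

section
/- Two-sided symmetrized maximum is bounded by the sum of two Rademacher complexities: Let S⁻ = (Z₁^{−1},…,Zₙ^{−1}) and S⁺ = (Z₁^{+1},…,Zₙ^{+1}) be two size-n samples, let Θ̂ ⊆ Θ be any finite set, and for σ ∈ {−1,+1}ⁿ let R̂_σ(θ) = (1/n)∑_{i=1}^n ℓ(θ, Z_i^{σᵢ}). Then E_σ[ max_{θ ∈ Θ̂} ( R̂_{−σ}(θ) − R̂_σ(θ) ) ] ≤ Rad(Θ̂, S⁻) + Rad(Θ̂, S⁺), where σ is uniform on {−1,+1}ⁿ and −σ = (−σ₁,…,−σₙ). -/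
open MeasureTheory Real

noncomputable def empRisk {X Z : Type*} (ℓ : X → Z → ℝ) {n : ℕ} (θ : X) (S : Fin n → Z) : ℝ :=
  (n : ℝ)⁻¹ * ∑ i, ℓ θ (S i)

/-- The mixed sample `S_σ` (`true ↔ +1`, i.e. the `i`-th point comes from `Sp` iff `σ i`). -/
def mix {Z : Type*} {n : ℕ} (Sm Sp : Fin n → Z) (σ : Fin n → Bool) : Fin n → Z :=
  fun i => if σ i then Sp i else Sm i

/-!
On the mixed samples, `R̂_{−σ}(θ) − R̂_σ(θ) = n⁻¹ (∑ᵢ σᵢ ℓ(θ, Zᵢ⁻) + ∑ᵢ (−σᵢ) ℓ(θ, Zᵢ⁺))`, so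
subadditivity of the supremum separates the two samples; since `−σ` has the same law as `σ`, the
two averaged suprema are the Rademacher complexities of `S⁻` and `S⁺`.
-/

/-- The signed sum `∑ᵢ σᵢ aᵢ` of a family `a`, with the sign vector encoded by `true ↔ +1`, so that
the complement `σᶜ` is the opposite sign vector. -/
def signedSum {ι R : Type*} [Fintype ι] [Ring R] (σ : ι → Bool) (a : ι → R) : R :=
  ∑ i, (if σ i then 1 else -1) * a i

theorem csSup_image_add_le {α β : Type*} [ConditionallyCompleteLattice β] [Add β] [AddLeftMono β]
    [AddRightMono β] {s : Set α} {f g : α → β} (hs : s.Nonempty)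
    (hf : BddAbove (f '' s)) (hg : BddAbove (g '' s)) :
    sSup ((fun x => f x + g x) '' s) ≤ sSup (f '' s) + sSup (g '' s) := by
  refine csSup_le (hs.image _) ?_
  rintro _ ⟨x, hx, rfl⟩
  exact add_le_add (le_csSup hf (Set.mem_image_of_mem f hx))
    (le_csSup hg (Set.mem_image_of_mem g hx))

theorem abs_signedSum_le {ι R : Type*} [Fintype ι] [Ring R] [LinearOrder R] [IsOrderedAddMonoid R]
    (σ : ι → Bool) (a : ι → R) : |signedSum σ a| ≤ ∑ i, |a i| := by
  refine (Finset.abs_sum_le_sum_abs _ _).trans_eq (Finset.sum_congr rfl fun i _ => ?_)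
  cases σ i <;> simp

theorem bddAbove_signedSum_image {ι α : Type*} [Fintype ι] {s : Set α} {f : α → ι → ℝ}
    (hf : ∀ i, Bornology.IsBounded ((f · i) '' s)) (σ : ι → Bool) :
    BddAbove ((fun x => signedSum σ (f x)) '' s) := by
  choose B hB using fun i => (hf i).exists_norm_le
  refine ⟨∑ i, B i, ?_⟩
  rintro _ ⟨x, hx, rfl⟩
  calc
    signedSum σ (f x) ≤ ∑ i, |f x i| := (le_abs_self _).trans (abs_signedSum_le σ _)
    _ ≤ ∑ i, B i := Finset.sum_le_sum fun i _ => hB i _ ⟨x, hx, rfl⟩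

theorem sum_mix_compl_sub_sum_mix {Z R : Type*} [Ring R] {n : ℕ} (g : Z → R) (Sm Sp : Fin n → Z)
    (σ : Fin n → Bool) :
    ∑ i, g (mix Sm Sp σᶜ i) - ∑ i, g (mix Sm Sp σ i) =
      signedSum σ (fun i => g (Sm i)) + signedSum σᶜ (fun i => g (Sp i)) := by
  simp only [signedSum, ← Finset.sum_sub_distrib, ← Finset.sum_add_distrib]
  refine Finset.sum_congr rfl fun i _ => ?_
  cases h : σ i <;> simp [mix, h, sub_eq_add_neg, add_comm]

theorem empRisk_mix_compl_sub_empRisk_mix {Θ Z : Type*} {n : ℕ} (ℓ : Θ → Z → ℝ) (θ : Θ)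
    (Sm Sp : Fin n → Z) (σ : Fin n → Bool) :
    empRisk ℓ θ (mix Sm Sp σᶜ) - empRisk ℓ θ (mix Sm Sp σ) =
      (n : ℝ)⁻¹ * (signedSum σ (fun i => ℓ θ (Sm i)) + signedSum σᶜ (fun i => ℓ θ (Sp i))) := by
  rw [empRisk, empRisk, ← mul_sub, sum_mix_compl_sub_sum_mix]

theorem sSup_empRisk_mix_compl_sub_empRisk_mix_le {Θ Z : Type*} {n : ℕ} {ℓ : Θ → Z → ℝ}
    {Sm Sp : Fin n → Z} {C : Set Θ} (hC : C.Nonempty)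
    (hm : ∀ i, Bornology.IsBounded ((ℓ · (Sm i)) '' C))
    (hp : ∀ i, Bornology.IsBounded ((ℓ · (Sp i)) '' C)) (σ : Fin n → Bool) :
    sSup ((fun θ => empRisk ℓ θ (mix Sm Sp σᶜ) - empRisk ℓ θ (mix Sm Sp σ)) '' C) ≤
      (n : ℝ)⁻¹ * (sSup ((fun θ => signedSum σ fun i => ℓ θ (Sm i)) '' C) +
        sSup ((fun θ => signedSum σᶜ fun i => ℓ θ (Sp i)) '' C)) := by
  simp only [empRisk_mix_compl_sub_empRisk_mix, ← smul_eq_mul]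
  rw [← Set.image_image ((n : ℝ)⁻¹ • ·), Set.image_smul, Real.sSup_smul_of_nonneg (by positivity)]
  gcongr
  exact csSup_image_add_le hC (bddAbove_signedSum_image hm σ) (bddAbove_signedSum_image hp σᶜ)

theorem stmt_15_general {Θ Z : Type*} (n : ℕ) (_hn : 0 < n)
    (ℓ : Θ → Z → ℝ) (Sm Sp : Fin n → Z) (C : Set Θ) (hC : C.Nonempty)
    (hm : ∀ i, Bornology.IsBounded ((ℓ · (Sm i)) '' C))
    (hp : ∀ i, Bornology.IsBounded ((ℓ · (Sp i)) '' C)) :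
    (2 ^ n : ℝ)⁻¹ *
        ∑ σ : Fin n → Bool,
          sSup ((fun θ =>
            empRisk ℓ θ (mix Sm Sp fun i => !σ i) - empRisk ℓ θ (mix Sm Sp σ)) '' C) ≤
      rad ℓ C Sm + rad ℓ C Sp := by
  let M (S : Fin n → Z) (σ : Fin n → Bool) : ℝ :=
    sSup ((fun θ => signedSum σ fun i => ℓ θ (S i)) '' C)
  have sum_compl : ∑ σ, M Sp σᶜ = ∑ σ, M Sp σ := compl_bijective.sum_comp (M Sp)
  calc
    _ ≤ (2 ^ n : ℝ)⁻¹ * ∑ σ, (n : ℝ)⁻¹ * (M Sm σ + M Sp σᶜ) := by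
      gcongr with σ
      exact sSup_empRisk_mix_compl_sub_empRisk_mix_le hC hm hp σ
    _ = (n : ℝ)⁻¹ * ((2 ^ n : ℝ)⁻¹ * ∑ σ, M Sm σ) + (n : ℝ)⁻¹ * ((2 ^ n : ℝ)⁻¹ * ∑ σ, M Sp σ) := by
      rw [← Finset.mul_sum, Finset.sum_add_distrib, sum_compl]
      ring
    _ = rad ℓ C Sm + rad ℓ C Sp := rfl

/-- two-sided symmetrized maximum is bounded by two Rademacher complexities.
For any finite nonempty `Θ̂ ⊆ Θ`, writing `R̂_σ(θ)` for the empirical risk on the mixed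
sample `S_σ`, `E_σ[max_{θ ∈ Θ̂}(R̂_{−σ}(θ) − R̂_σ(θ))] ≤ Rad(Θ̂, S⁻) + Rad(Θ̂, S⁺)`. -/
theorem stmt_15 {Θ Z : Type*} (n : ℕ) (hn : 0 < n)
    (ℓ : Θ → Z → ℝ) (Sm Sp : Fin n → Z)
    (C : Set Θ) (hCfin : C.Finite) (hCne : C.Nonempty) :
    (2 ^ n : ℝ)⁻¹ *
        ∑ σ : Fin n → Bool,
          sSup ((fun θ =>
            empRisk ℓ θ (mix Sm Sp fun i => !σ i) - empRisk ℓ θ (mix Sm Sp σ)) '' C) ≤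
      rad ℓ C Sm + rad ℓ C Sp :=
  stmt_15_general n hn ℓ Sm Sp C hCne (fun _ => (hCfin.image _).isBounded)
    fun _ => (hCfin.image _).isBounded
end
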